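/- Average-case corner-point bound: Let K and N be positive integers with N̄ := min(K,N) ≥ 2, let ℓ ∈ {1,…,N̄−1}, and set M̃_ℓ := (N/(ℓ+1))·(1 − 1/N)^ℓ. Then ((N − M̃_ℓ)/M̃_ℓ)·(1 − (1 − M̃_ℓ/N)^{N̄}) ≤ η(ℓ/N, 1/N) · ( N − (N + ℓ/2)·(1 − 1/N)^ℓ ). -/

import Mathlib

/-- The function `η(u,v)` from Theorem 4 of the paper. -/
noncomputable def eta (u v : ℝ) : ℝ :=
  ((u + v - v * (1 - v) ^ (u / v)) *
      (1 - (1 - v / (u + v) * (1 - v) ^ (u / v)) ^ (1 / v))) /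
    ((1 - v) ^ (u / v) * (1 - (1 + u / 2) * (1 - v) ^ (u / v)))

/-- **Average-case corner-point bound.** For `N̄ := min(K,N) ≥ 2`,
`ℓ ∈ {1,…,N̄−1}` and the corner memory point `M̃_ℓ = (N/(ℓ+1))(1−1/N)^ℓ`:
`R_YMA(K,N,M̃_ℓ) = ((N−M̃_ℓ)/M̃_ℓ)(1−(1−M̃_ℓ/N)^{N̄})
  ≤ η(ℓ/N, 1/N)·(N − (N + ℓ/2)(1 − 1/N)^ℓ)`. -/
theorem average_case_corner_point (K N : ℕ) (hKN : 2 ≤ min K N)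
    (ℓ : ℕ) (hℓ1 : 1 ≤ ℓ) (hℓ2 : ℓ ≤ min K N - 1)
    (M : ℝ) (hMdef : M = (N : ℝ) / ((ℓ : ℝ) + 1) * (1 - 1 / (N : ℝ)) ^ ℓ) :
    ((N : ℝ) - M) / M * (1 - (1 - M / (N : ℝ)) ^ min K N) ≤
      eta ((ℓ : ℝ) / (N : ℝ)) (1 / (N : ℝ)) *
        ((N : ℝ) - ((N : ℝ) + (ℓ : ℝ) / 2) * (1 - 1 / (N : ℝ)) ^ ℓ) := by
  have hN2 : 2 ≤ N := le_trans hKN (min_le_right _ _)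
  have hN : (2 : ℝ) ≤ N := by exact_mod_cast hN2
  have hl : (1 : ℝ) ≤ ℓ := by exact_mod_cast hℓ1
  have hN0 : (0 : ℝ) < N := by linarith
  have hv : (0 : ℝ) < 1 / (N : ℝ) := by positivity
  have hv1 : 1 / (N : ℝ) ≤ 1 / 2 := one_div_le_one_div_of_le (by norm_num) hN
  have hdiv : (ℓ : ℝ) / (N : ℝ) / (1 / (N : ℝ)) = (ℓ : ℝ) := by field_simp
  have hinv : 1 / (1 / (N : ℝ)) = (N : ℝ) := by field_simp
  unfold eta
  rw [hdiv, hinv, Real.rpow_natCast, Real.rpow_natCast]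
  have hq0 : 0 < (1 - 1 / (N : ℝ)) ^ ℓ := pow_pos (by linarith) _
  have hq1 : (1 - 1 / (N : ℝ)) ^ ℓ ≤ 1 := pow_le_one₀ (by linarith) (by linarith)
  have hprod : (1 + (ℓ : ℝ) * (1 / (N : ℝ))) * (1 - 1 / (N : ℝ)) ^ ℓ ≤ 1 := by
    have hb : 1 + (ℓ : ℝ) * (1 / (N : ℝ)) ≤ (1 + 1 / (N : ℝ)) ^ ℓ :=
      one_add_mul_le_pow (by linarith) ℓ
    calc _ ≤ (1 + 1 / (N : ℝ)) ^ ℓ * (1 - 1 / (N : ℝ)) ^ ℓ :=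
          mul_le_mul_of_nonneg_right hb hq0.le
      _ = ((1 + 1 / (N : ℝ)) * (1 - 1 / (N : ℝ))) ^ ℓ := (mul_pow _ _ _).symm
      _ ≤ 1 := pow_le_one₀ (mul_nonneg (by linarith) (by linarith)) (by nlinarith)
  generalize (1 - 1 / (N : ℝ)) ^ ℓ = q at *
  have hD : 0 < 1 - (1 + (ℓ : ℝ) / N / 2) * q := by
    have h1 : 0 < (ℓ : ℝ) * (1 / (N : ℝ)) * q := by positivity
    have h2 : (ℓ : ℝ) / N / 2 = (ℓ : ℝ) * (1 / (N : ℝ)) / 2 := by ring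
    rw [h2]
    nlinarith
  have hw : 1 / (N : ℝ) / ((ℓ : ℝ) / N + 1 / N) * q = q / (ℓ + 1) := by field_simp
  have hMN : M / N = q / (ℓ + 1) := by rw [hMdef]; field_simp
  have hM : ((N : ℝ) - M) / M = (ℓ + 1 - q) / q := by rw [hMdef]; field_simp
  have hx1 : q / ((ℓ : ℝ) + 1) ≤ 1 := by rw [div_le_one (by linarith)]; linarith
  have hx0 : 0 < q / ((ℓ : ℝ) + 1) := by positivity
  rw [hw, hMN, hM]
  generalize q / ((ℓ : ℝ) + 1) = x at *
  have hpow : (1 - x) ^ N ≤ (1 - x) ^ min K N :=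
    pow_le_pow_of_le_one (by linarith) (by linarith) (min_le_right _ _)
  have hR : ((ℓ : ℝ) / N + 1 / N - 1 / N * q) * (1 - (1 - x) ^ N) /
      (q * (1 - (1 + (ℓ : ℝ) / N / 2) * q)) * ((N : ℝ) - (N + (ℓ : ℝ) / 2) * q)
      = (ℓ + 1 - q) / q * (1 - (1 - x) ^ N) := by
    have e1 : (N : ℝ) - (N + (ℓ : ℝ) / 2) * q = N * (1 - (1 + (ℓ : ℝ) / N / 2) * q) := by
      field_simp
    have e2 : (ℓ : ℝ) / N + 1 / N - 1 / N * q = (ℓ + 1 - q) / N := by ring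
    rw [e1, e2]
    generalize 1 - (1 + (ℓ : ℝ) / N / 2) * q = D at *
    have := hD.ne'
    field_simp
  rw [hR]
  exact mul_le_mul_of_nonneg_left (by linarith) (div_nonneg (by linarith) hq0.le)
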